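/- Consider the system x_{t+1} = A x_t + w_t, y_t = C x_t + v_t with x_0 = 0, ‖w_t‖ ≤ C_w, ‖v_t‖ ≤ C_v for all t, and the convention y_s = 0 for s ≤ 0. Suppose A = S J S⁻¹ where J is block diagonal with Jordan blocks of size at most r and all eigenvalues of A are real and contained in [−1, 1], and set κ_A := ‖S‖ ‖S⁻¹‖. Then under the high-order differencing hint ỹ_t := ∑_{k=1}^{r} (−1)^{k+1} binom(r, k) y_{t-2k}, corresponding to the filter polynomial q_r(z) = (z² − 1)^r, the residual satisfies, for all t ≥ 1, ‖y_t − ỹ_t‖ ≤ 2^r C_v + (8^r + r (2e²)^r n) κ_A ‖C‖ C_w. -/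

import Mathlib

/-- The operator norm of a matrix induced by the Euclidean (ℓ²) norms.  For a column
matrix (a vector), this is the Euclidean norm of the vector. -/
noncomputable def opNorm {𝕜 : Type*} [RCLike 𝕜] {m n : Type*} [Fintype m] [Fintype n]
    [DecidableEq n] (A : Matrix m n 𝕜) : ℝ :=
  ‖LinearMap.toContinuousLinearMap (Matrix.toEuclideanLin A)‖

/-- The nilpotent upper shift matrix: `N i (i+1) = 1`, all other entries `0`. -/
def shiftMatrix (K : Type*) [Ring K] (m : ℕ) : Matrix (Fin m) (Fin m) K :=
  Matrix.of fun i j => if (i : ℕ) + 1 = (j : ℕ) then 1 else 0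

/-- The Jordan block `λ I + N` of size `m` with eigenvalue `λ`. -/
noncomputable def jordanBlock (K : Type*) [Ring K] (lam : K) (m : ℕ) :
    Matrix (Fin m) (Fin m) K :=
  lam • (1 : Matrix (Fin m) (Fin m) K) + shiftMatrix K m

/-- `A = S J S⁻¹` over `ℝ`, where `J` is block diagonal with Jordan blocks of size at
most `r` whose (real) eigenvalues lie in `[−1, 1]`, and `κA = ‖S‖ ‖S⁻¹‖`. -/
def HasRealJordanForm (n r : ℕ) (A : Matrix (Fin n) (Fin n) ℝ) (κA : ℝ) : Prop :=
  ∃ (b : ℕ) (msize : Fin b → ℕ) (lam : Fin b → ℝ)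
    (S : Matrix (Fin n) ((i : Fin b) × Fin (msize i)) ℝ)
    (S' : Matrix ((i : Fin b) × Fin (msize i)) (Fin n) ℝ),
      (∀ i, msize i ≤ r) ∧ (∀ i, lam i ∈ Set.Icc (-1 : ℝ) 1) ∧
      S * S' = 1 ∧ S' * S = 1 ∧
      A = S * Matrix.blockDiagonal' (fun i => jordanBlock ℝ (lam i) (msize i)) * S' ∧
      κA = opNorm S * opNorm S'

section Helpers
open scoped Matrix.Norms.L2Operator

theorem opNorm_eq {m n : Type*} [Fintype m] [Fintype n]
    [DecidableEq n] (A : Matrix m n ℝ) : opNorm A = ‖A‖ := rfl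

theorem step_bound (l H : ℝ) (hl : l ∈ Set.Icc (-1:ℝ) 1) (g h : ℤ → ℝ)
    (hg0 : ∀ s ≤ 0, g s = 0) (hg : ∀ t, g (t+1) = l * g t + h t)
    (hh : ∀ t, |h t| ≤ H) (t : ℤ) : |fwdDiff (-2:ℤ) g t| ≤ 4 * H := by
  have hH : 0 ≤ H := (abs_nonneg _).trans (hh 0)
  have hl1 : |l| ≤ 1 := abs_le.2 hl
  have key : ∀ t, (1 - |l|) * |g t| ≤ H := by
    intro t
    rcases le_total t 0 with h0 | h0
    · simp [hg0 t h0, hH]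
    · obtain ⟨k, rfl⟩ := Int.eq_ofNat_of_zero_le h0
      induction k with
      | zero => simp [hg0 0 le_rfl, hH]
      | succ k ih =>
        have ih := ih (by positivity)
        push_cast
        rw [hg]
        have h1 : |l * g k + h k| ≤ |l| * |g k| + H := by
          refine (abs_add_le _ _).trans ?_
          rw [abs_mul]
          linarith [hh k]
        nlinarith [abs_nonneg l, mul_le_mul_of_nonneg_left h1 (sub_nonneg.2 hl1),
          mul_le_mul_of_nonneg_left ih (abs_nonneg l)]
  obtain ⟨s, hs2, hs1, hs⟩ : ∃ s : ℝ, s * s = 1 ∧ |s| = 1 ∧ |l - s| = 1 - |l| := by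
    rcases le_total 0 l with h0 | h0
    · refine ⟨1, by simp, by simp, ?_⟩
      rw [abs_of_nonneg h0, abs_of_nonpos (by linarith [hl.2])]; ring
    · refine ⟨-1, by simp, by simp, ?_⟩
      rw [abs_of_nonpos h0, abs_of_nonneg (by linarith [hl.1])]; ring
  have hd : ∀ t, |g (t+1) - s * g t| ≤ 2 * H := by
    intro t
    have : g (t+1) - s * g t = (l - s) * g t + h t := by rw [hg]; ring
    rw [this]
    refine (abs_add_le _ _).trans ?_
    rw [abs_mul, hs]
    linarith [hh t, key t]
  have h1 := hd (t-1)
  have h2 := hd (t-2)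
  rw [show t - 1 + 1 = t by ring] at h1
  rw [show t - 2 + 1 = t - 1 by ring] at h2
  have : fwdDiff (-2:ℤ) g t = -((g t - s * g (t-1)) + s * (g (t-1) - s * g (t-2))) := by
    rw [fwdDiff, show t + -2 = t - 2 by ring]
    linear_combination (- g (t-2)) * hs2
  rw [this, abs_neg]
  refine (abs_add_le _ _).trans ?_
  rw [abs_mul, hs1]
  linarith

theorem iter_bound {E : Type*} [SeminormedAddCommGroup E] (f : ℤ → E) (U : ℝ)
    (hf : ∀ t, ‖f t‖ ≤ U) (k : ℕ) (t : ℤ) : ‖(fwdDiff (-2:ℤ))^[k] f t‖ ≤ 2 ^ k * U := by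
  induction k generalizing t with
  | zero => simpa using hf t
  | succ k ih =>
    rw [Function.iterate_succ_apply', fwdDiff]
    refine (norm_sub_le _ _).trans ?_
    rw [pow_succ]
    linarith [ih t, ih (t + -2)]

theorem block_bound (m r : ℕ) (hmr : m ≤ r) (l U : ℝ) (hl : l ∈ Set.Icc (-1:ℝ) 1) (hU : 0 ≤ U)
    (z u : ℕ → ℤ → ℝ) (hz0 : ∀ a, ∀ s ≤ 0, z a s = 0) (hzm : ∀ t, z m t = 0)
    (hz : ∀ a < m, ∀ t, z a (t+1) = l * z a t + z (a+1) t + u a t)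
    (hu : ∀ a t, |u a t| ≤ U) (a : ℕ) (ha : a < m) (t : ℤ) :
    |(fwdDiff (-2:ℤ))^[r] (z a) t| ≤ 2 * 4 ^ r * U := by
  have main : ∀ k ≤ m, ∀ t, |(fwdDiff (-2:ℤ))^[k] (z (m-k)) t| ≤ 2 * (4 ^ k - 2 ^ k) * U := by
    intro k
    induction k with
    | zero => intro _ t; simp [hzm]
    | succ k ih =>
      intro hk t
      rw [Function.iterate_succ_apply']
      have e : m - (k+1) + 1 = m - k := by omega
      have := step_bound l (2 * (4 ^ k - 2 ^ k) * U + 2 ^ k * U) hl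
        ((fwdDiff (-2:ℤ))^[k] (z (m-(k+1))))
        (fun t => (fwdDiff (-2:ℤ))^[k] (z (m-k)) t + (fwdDiff (-2:ℤ))^[k] (u (m-(k+1))) t)
        ?_ ?_ ?_ t
      · refine this.trans (le_of_eq ?_)
        rw [pow_succ, pow_succ]; ring
      · intro s hs
        rw [fwdDiff_iter_eq_sum_shift]
        refine Finset.sum_eq_zero fun i _ => ?_
        rw [hz0 _ _ (by simp; omega), smul_zero]
      · intro t
        simp only [fwdDiff_iter_eq_sum_shift, Finset.mul_sum]
        rw [← Finset.sum_add_distrib, ← Finset.sum_add_distrib]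
        refine Finset.sum_congr rfl fun i _ => ?_
        rw [add_right_comm, hz _ (by omega), e]
        simp only [zsmul_eq_mul]
        ring
      · intro t
        refine (abs_add_le _ _).trans (add_le_add (ih (by omega) t) ?_)
        exact iter_bound (u _) U (hu _) k t
  have h1 := iter_bound ((fwdDiff (-2:ℤ))^[m-a] (z a)) _ (fun t => by
    have := main (m-a) (by omega) t
    rwa [show m - (m - a) = a by omega] at this) (r - (m-a)) t
  rw [← Function.iterate_add_apply, show r - (m-a) + (m-a) = r by omega] at h1
  refine h1.trans ?_
  have : (4:ℝ)^r = 4 ^ (r - (m-a)) * 4 ^ (m-a) := by rw [← pow_add]; congr 1; omega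
  rw [this]
  have h2 : (2:ℝ) ^ (r-(m-a)) ≤ 4 ^ (r-(m-a)) := by gcongr; norm_num
  have h3 : (4:ℝ) ^ (m-a) - 2 ^ (m-a) ≤ 4 ^ (m-a) := by
    have : (0:ℝ) < 2 ^ (m-a) := by positivity
    linarith
  have h4 : (0:ℝ) ≤ 4 ^ (m-a) - 2 ^ (m-a) := by
    have : (2:ℝ) ^ (m-a) ≤ 4 ^ (m-a) := by gcongr; norm_num
    linarith
  have h5 := mul_le_mul h2 h3 h4 (by positivity)
  nlinarith

theorem col_entry_le {m : Type*} [Fintype m] (X : Matrix m (Fin 1) ℝ) (i : m) :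
    |X i 0| ≤ ‖X‖ := by
  have h := Matrix.l2_opNorm_mulVec X (WithLp.toLp 2 (fun _ => (1:ℝ)))
  have h1 : ‖(WithLp.toLp 2 (fun _ => (1:ℝ)) : EuclideanSpace ℝ (Fin 1))‖ = 1 := by
    simp [EuclideanSpace.norm_eq]
  rw [h1, mul_one] at h
  refine le_trans ?_ h
  refine le_trans (le_of_eq ?_) (PiLp.norm_apply_le _ i)
  simp [Matrix.mulVec, dotProduct]

theorem norm_le_col {m : Type*} [Fintype m] (X : Matrix m (Fin 1) ℝ) (B : ℝ)
    (hB : ∀ i, |X i 0| ≤ B) (hB0 : 0 ≤ B) : ‖X‖ ≤ Fintype.card m * B := by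
  rw [Matrix.l2_opNorm_def]
  refine ContinuousLinearMap.opNorm_le_bound _ (by positivity) fun a => ?_
  classical
  have key : ∀ v : EuclideanSpace ℝ m, ‖v‖ ≤ ∑ i, |v i| := by
    intro v
    rw [EuclideanSpace.norm_eq]
    apply Real.sqrt_le_iff.2
    refine ⟨Finset.sum_nonneg fun _ _ => abs_nonneg _, ?_⟩
    simpa using Finset.sum_sq_le_sq_sum_of_nonneg (s := Finset.univ) (f := fun i => |v i|) (fun _ _ => abs_nonneg _)
  refine (key _).trans ?_
  have ha : |a 0| ≤ ‖a‖ := PiLp.norm_apply_le a 0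
  calc _ ≤ ∑ i : m, B * ‖a‖ := by
        refine Finset.sum_le_sum fun i _ => ?_
        simp [Matrix.toEuclideanLin, Matrix.mulVec, dotProduct, abs_mul]
        exact mul_le_mul (hB i) ha (abs_nonneg _) hB0
    _ = _ := by simp; ring

theorem iter_map {E F : Type*} [AddCommGroup E] [AddCommGroup F] (L : E →+ F) (f : ℤ → E)
    (k : ℕ) (t : ℤ) :
    (fwdDiff (-2:ℤ))^[k] (fun s => L (f s)) t = L ((fwdDiff (-2:ℤ))^[k] f t) := by
  simp [fwdDiff_iter_eq_sum_shift, map_sum]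

theorem main_thm 
    (n p r : ℕ)
    (A : Matrix (Fin n) (Fin n) ℝ) (C : Matrix (Fin p) (Fin n) ℝ)
    (κA Cw Cv : ℝ)
    (hJordan : HasRealJordanForm n r A κA)
    (x w : ℤ → Matrix (Fin n) (Fin 1) ℝ) (y v : ℤ → Matrix (Fin p) (Fin 1) ℝ)
    (hx0 : ∀ s : ℤ, s ≤ 0 → x s = 0)
    (hdyn : ∀ t : ℤ, x (t + 1) = A * x t + w t)
    (hout : ∀ t : ℤ, y t = C * x t + v t)
    (hw : ∀ t, opNorm (w t) ≤ Cw)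
    (hv : ∀ t, opNorm (v t) ≤ Cv)
    (ytil : ℤ → Matrix (Fin p) (Fin 1) ℝ)
    (hytil : ∀ t : ℤ, ytil t =
      ∑ k ∈ Finset.Icc 1 r, ((-1 : ℝ) ^ (k + 1) * (r.choose k : ℝ)) • y (t - 2 * (k : ℤ)))
    (t : ℤ) :
    opNorm (y t - ytil t)
      ≤ 2 ^ r * Cv + ((8 : ℝ) ^ r + (r : ℝ) * (2 * Real.exp 2) ^ r * n) * κA * opNorm C * Cw := by
  obtain ⟨b, ms, lam, S, S', hms, hlam, hSS', hS'S, hA, hκ⟩ := hJordan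
  simp only [opNorm_eq] at *
  have hCw : 0 ≤ Cw := (norm_nonneg _).trans (hw 0)
  -- residual as iterated difference
  have hres : ‖y t - ytil t‖ = ‖(fwdDiff (-2:ℤ))^[r] y t‖ := by
    have : (fwdDiff (-2:ℤ))^[r] y t = ((-1:ℝ)^r) • (y t - ytil t) := by
      rw [fwdDiff_iter_eq_sum_shift, hytil, Finset.sum_range_succ', smul_sub, Finset.smul_sum,
        add_comm, sub_eq_add_neg, ← Finset.sum_neg_distrib]
      congr 1
      · simp [← Int.cast_smul_eq_zsmul ℝ]
      · rw [Finset.range_eq_Ico, Finset.sum_Ico_add' (fun k => ((-1:ℤ) ^ (r - k) * (r.choose k : ℤ)) • y (t + k • (-2:ℤ))) 0 r 1]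
        refine Finset.sum_congr (by ext; simp) fun k hk => ?_
        have hk' : k ≤ r := by simp at hk; omega
        rw [← Int.cast_smul_eq_zsmul ℝ, smul_smul, ← neg_smul, show t + k • (-2:ℤ) = t - 2 * (k:ℤ) by simp; ring]
        congr 1
        push_cast
        obtain ⟨j, rfl⟩ := Nat.exists_eq_add_of_le hk'
        rw [Nat.add_sub_cancel_left, pow_add, pow_succ]
        have : ((-1:ℝ)^k) * (-1)^k = 1 := by rw [← mul_pow]; simp
        linear_combination (-(-1:ℝ)^j * ((k+j).choose k)) * this
    rw [this, norm_smul]; simp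
  -- coordinates
  let z : ℤ → Matrix ((i : Fin b) × Fin (ms i)) (Fin 1) ℝ := fun s => S' * x s
  let u : ℤ → Matrix ((i : Fin b) × Fin (ms i)) (Fin 1) ℝ := fun s => S' * w s
  have hxz : ∀ s, x s = S * z s := fun s => by
    simp only [z]; rw [← Matrix.mul_assoc, hSS', Matrix.one_mul]
  have hzd : ∀ s, z (s+1) = Matrix.blockDiagonal' (fun i => jordanBlock ℝ (lam i) (ms i)) * z s + u s := by
    intro s
    simp only [z, u]
    rw [hdyn, hA, Matrix.mul_add]
    simp only [← Matrix.mul_assoc]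
    rw [hS'S, Matrix.one_mul]
  have hub : ∀ s, ‖u s‖ ≤ ‖S'‖ * Cw := fun s =>
    (Matrix.l2_opNorm_mul _ _).trans (mul_le_mul_of_nonneg_left (hw s) (norm_nonneg _))
  have hz0 : ∀ s ≤ 0, z s = 0 := fun s hs => by simp [z, hx0 s hs]
  have hU : 0 ≤ ‖S'‖ * Cw := by positivity
  have hcard : Fintype.card ((i : Fin b) × Fin (ms i)) = n := by
    have h1 : (S * S').trace = (n:ℝ) := by rw [hSS']; simp
    have h2 : (S' * S).trace = (Fintype.card ((i : Fin b) × Fin (ms i)) : ℝ) := by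
      rw [hS'S, Matrix.trace_one]
    rw [Matrix.trace_mul_comm, h2] at h1
    exact_mod_cast h1
  have hent : ∀ q s, |((fwdDiff (-2:ℤ))^[r] z s) q 0| ≤ 2 * 4 ^ r * (‖S'‖ * Cw) := by
    rintro ⟨i, a⟩ s
    have e := iter_map (Matrix.entryAddMonoidHom ℝ (⟨i, a⟩ : (i : Fin b) × Fin (ms i)) (0 : Fin 1)) z r s
    simp only [Matrix.entryAddMonoidHom_apply] at e
    rw [← e]
    have := block_bound (ms i) r (hms i) (lam i) (‖S'‖ * Cw) (hlam i) hU
      (fun a t => if h : a < ms i then z t ⟨i, ⟨a, h⟩⟩ 0 else 0)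
      (fun a t => if h : a < ms i then u t ⟨i, ⟨a, h⟩⟩ 0 else 0) ?_ ?_ ?_ ?_ a a.2 s
    · simpa using this
    · intro a s hs; simp [hz0 s hs]
    · intro t; simp
    · intro a ha t
      simp only [ha, dif_pos]
      rw [hzd, Matrix.add_apply, Matrix.mul_apply, Fintype.sum_sigma, Finset.sum_eq_single i]
      · congr 1
        simp only [Matrix.blockDiagonal'_apply_eq, jordanBlock, shiftMatrix, Matrix.add_apply,
          Matrix.smul_apply, Matrix.one_apply, Matrix.of_apply, add_mul, Finset.sum_add_distrib]
        congr 1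
        · simp
        · by_cases h : a + 1 < ms i
          · rw [dif_pos h, Finset.sum_eq_single ⟨a+1, h⟩]
            · simp
            · intro c _ hc
              rw [if_neg, zero_mul]
              rintro h'
              exact hc (Fin.ext h'.symm)
            · simp
          · rw [dif_neg h]
            refine Finset.sum_eq_zero fun c _ => ?_
            rw [if_neg, zero_mul]
            have := c.2
            omega
      · intro j _ hj
        refine Finset.sum_eq_zero fun c _ => ?_
        rw [Matrix.blockDiagonal'_apply_ne _ _ _ hj.symm, zero_mul]
      · simp
    · intro a t
      by_cases h : a < ms i
      · simp only [h, dif_pos]; exact (col_entry_le _ _).trans (hub t)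
      · simp [h, hU]
  have hzn : ‖(fwdDiff (-2:ℤ))^[r] z t‖ ≤ n * (2 * 4 ^ r * (‖S'‖ * Cw)) := by
    have := norm_le_col _ _ (fun q => hent q t) (by positivity)
    rwa [hcard] at this
  have hy : (fwdDiff (-2:ℤ))^[r] y t = C * (S * (fwdDiff (-2:ℤ))^[r] z t) + (fwdDiff (-2:ℤ))^[r] v t := by
    have : y = fun s => C * (S * z s) + v s := by
      funext s; rw [hout, ← hxz]
    rw [this]
    simp only [fwdDiff_iter_eq_sum_shift, smul_add, Finset.sum_add_distrib, Matrix.mul_sum, Matrix.mul_smul]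
  have hnr : (n:ℝ) * (2 * 4 ^ r) ≤ r * (2 * Real.exp 2) ^ r * n := by
    rcases Nat.eq_zero_or_pos r with h0 | h0
    · have : n = 0 := by
        rw [← hcard, Fintype.card_eq_zero_iff]
        refine ⟨fun q => ?_⟩
        have := q.2.2
        have := hms q.1
        omega
      simp [this]
    · have he : (4:ℝ) ≤ Real.exp 2 := by
        have h1 := Real.add_one_le_exp (1:ℝ)
        have : Real.exp 2 = Real.exp 1 * Real.exp 1 := by rw [← Real.exp_add]; norm_num
        nlinarith
      have h1 : (4:ℝ) ^ r ≤ Real.exp 2 ^ r := by gcongr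
      have h2 : (2:ℝ) ≤ 2 ^ r := by
        calc (2:ℝ) = 2 ^ 1 := by norm_num
          _ ≤ 2 ^ r := pow_le_pow_right₀ (by norm_num) h0
      have h3 : (1:ℝ) ≤ r := by exact_mod_cast h0
      rw [mul_pow, mul_comm]
      have h4 : (2:ℝ) * 4 ^ r ≤ 2 ^ r * Real.exp 2 ^ r := mul_le_mul h2 h1 (by positivity) (by positivity)
      refine mul_le_mul_of_nonneg_right (h4.trans ?_) (Nat.cast_nonneg n)
      exact le_mul_of_one_le_left (by positivity) h3
  rw [hres, hy, hκ]
  refine (norm_add_le _ _).trans ?_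
  rw [add_comm]
  refine add_le_add (iter_bound v Cv hv r t) ?_
  calc ‖C * (S * (fwdDiff (-2:ℤ))^[r] z t)‖ ≤ ‖C‖ * (‖S‖ * (n * (2 * 4 ^ r * (‖S'‖ * Cw)))) := by
        refine (Matrix.l2_opNorm_mul _ _).trans ?_
        gcongr
        refine (Matrix.l2_opNorm_mul _ _).trans ?_
        gcongr
    _ = (n * (2 * 4 ^ r)) * (‖S‖ * ‖S'‖) * ‖C‖ * Cw := by ring
    _ ≤ _ := by
        gcongr
        have : (0:ℝ) ≤ 8 ^ r := by positivity
        linarith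

end Helpers

/-- bounded residual under high-order differencing.  For a system
whose `A` has a real Jordan form with blocks of size at most `r` and eigenvalues in
`[−1,1]`, the hint `ỹ_t = ∑_{k=1}^r (−1)^{k+1} binom(r,k) y_{t−2k}` (filter
`q_r(z) = (z²−1)^r`) satisfies, for all `t ≥ 1`,
`‖y_t − ỹ_t‖ ≤ 2^r C_v + (8^r + r(2e²)^r n) κ_A ‖C‖ C_w`.
Sequences are indexed by `ℤ` with the conventions `x_s = 0` for `s ≤ 0`,
`w_s = 0` for `s < 0` and `v_s = 0` (hence `y_s = 0`) for `s ≤ 0`. -/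
theorem high_order_differencing_residual_bound
    (n p r : ℕ)
    (A : Matrix (Fin n) (Fin n) ℝ) (C : Matrix (Fin p) (Fin n) ℝ)
    (κA Cw Cv : ℝ)
    (hJordan : HasRealJordanForm n r A κA)
    (x w : ℤ → Matrix (Fin n) (Fin 1) ℝ) (y v : ℤ → Matrix (Fin p) (Fin 1) ℝ)
    (hx0 : ∀ s : ℤ, s ≤ 0 → x s = 0)
    (hw0 : ∀ s : ℤ, s < 0 → w s = 0)
    (hv0 : ∀ s : ℤ, s ≤ 0 → v s = 0)
    (hdyn : ∀ t : ℤ, x (t + 1) = A * x t + w t)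
    (hout : ∀ t : ℤ, y t = C * x t + v t)
    (hw : ∀ t, opNorm (w t) ≤ Cw)
    (hv : ∀ t, opNorm (v t) ≤ Cv)
    (ytil : ℤ → Matrix (Fin p) (Fin 1) ℝ)
    (hytil : ∀ t : ℤ, ytil t =
      ∑ k ∈ Finset.Icc 1 r, ((-1 : ℝ) ^ (k + 1) * (r.choose k : ℝ)) • y (t - 2 * (k : ℤ)))
    (t : ℤ) (ht : 1 ≤ t) :
    opNorm (y t - ytil t)
      ≤ 2 ^ r * Cv + ((8 : ℝ) ^ r + (r : ℝ) * (2 * Real.exp 2) ^ r * n) * κA * opNorm C * Cw := by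
  exact main_thm n p r A C κA Cw Cv hJordan x w y v hx0 hdyn hout hw hv ytil hytil t
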